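/- Let |p|<1 and let a_1,…,a_n, z_1,…,z_n ∈ ℂ* be such that all the theta values below are nonzero where required. Then det_{1≤i,j≤n} ( 1 / (a_i^{-1} θ(a_i z_j;p) θ(a_i/z_j;p)) ) = (−1)^{n(n−1)/2} · [∏_{1≤i<j≤n} a_i^{-1} θ(a_i a_j;p)θ(a_i/a_j;p) · ∏_{1≤i<j≤n} z_i^{-1} θ(z_i z_j;p)θ(z_i/z_j;p)] / [∏_{1≤i,j≤n} a_i^{-1} θ(a_i z_j;p)θ(a_i/z_j;p)] (elliptic Cauchy determinant). -/

import Mathlib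

noncomputable def qPochhammerInf (z q : ℂ) : ℂ := ∏' j : ℕ, (1 - z * q ^ j)

noncomputable def theta (z p : ℂ) : ℂ :=
  ∏' j : ℕ, (1 - z * p ^ j) * (1 - p ^ (j + 1) * z⁻¹)

noncomputable def ellGamma (z p q : ℂ) : ℂ :=
  ∏' jk : ℕ × ℕ,
    (1 - z⁻¹ * p ^ (jk.1 + 1) * q ^ (jk.2 + 1)) / (1 - z * p ^ jk.1 * q ^ jk.2)

/-- The homogeneous Cauchy determinant. -/
theorem det_cauchy_homogeneous {K : Type*} [Field K] (n : ℕ) (x x' y y' : Fin n → K)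
    (h : ∀ i j, x i * y' j - x' i * y j ≠ 0) :
    Matrix.det (Matrix.of fun i j : Fin n => (x i * y' j - x' i * y j)⁻¹) =
      (-1) ^ (n * (n - 1) / 2) *
        ((∏ i, ∏ j ∈ Finset.Ioi i, (x i * x' j - x' i * x j)) *
          (∏ i, ∏ j ∈ Finset.Ioi i, (y i * y' j - y' i * y j))) /
        ∏ i, ∏ j, (x i * y' j - x' i * y j) := by
  induction n with
  | zero => simp
  | succ n ih =>
    set s : Fin (n + 1) → Fin (n + 1) → K := fun i j => x i * y' j - x' i * y j with hs
    have hs0 : ∀ i j, s i j ≠ 0 := h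
    have key : Matrix.det (Matrix.of fun i j : Fin (n + 1) => (s i j)⁻¹) =
        Matrix.det (Matrix.of (Fin.cons (fun j => (s 0 j)⁻¹)
          (fun i j => (s i.succ j)⁻¹ - s 0 0 / s i.succ 0 * (s 0 j)⁻¹) :
            Fin (n + 1) → Fin (n + 1) → K)) := by
      refine Matrix.det_eq_of_forall_row_eq_smul_add_const
        (Fin.cons 0 fun i => s 0 0 / s i.succ 0) 0 rfl fun i j => ?_
      refine Fin.cases ?_ (fun i => ?_) i <;> simp
    have sub : ∀ i j : Fin n, (s i.succ j.succ)⁻¹ - s 0 0 / s i.succ 0 * (s 0 j.succ)⁻¹ =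
        (-((x 0 * x' i.succ - x' 0 * x i.succ) / s i.succ 0)) *
          (((y 0 * y' j.succ - y' 0 * y j.succ) / s 0 j.succ) * (s i.succ j.succ)⁻¹) := by
      intro i j
      have h1 := hs0 i.succ j.succ
      have h2 := hs0 i.succ 0
      have h3 := hs0 0 j.succ
      field_simp
      simp only [hs]
      ring
    have hsign : (-1 : K) ^ ((n + 1) * (n + 1 - 1) / 2) =
        (-1) ^ n * (-1) ^ (n * (n - 1) / 2) := by
      rw [← pow_add, Nat.triangle_succ, add_comm]
    have ih' := ih (fun i => x i.succ) (fun i => x' i.succ) (fun i => y i.succ)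
      (fun i => y' i.succ) fun i j => h _ _
    change Matrix.det (Matrix.of fun i j : Fin (n + 1) => (s i j)⁻¹) = _
    rw [key, Matrix.det_succ_column_zero, Fin.sum_univ_succ, Finset.sum_eq_zero, add_zero]
    · have hm : ((Matrix.of (Fin.cons (fun j => (s 0 j)⁻¹)
          (fun i j => (s i.succ j)⁻¹ - s 0 0 / s i.succ 0 * (s 0 j)⁻¹) :
            Fin (n + 1) → Fin (n + 1) → K)).submatrix (Fin.succAbove 0) Fin.succ) =
          Matrix.of fun i j : Fin n =>
            (-((x 0 * x' i.succ - x' 0 * x i.succ) / s i.succ 0)) *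
              (Matrix.of fun i j : Fin n => ((y 0 * y' j.succ - y' 0 * y j.succ) / s 0 j.succ) *
                (Matrix.of fun i j : Fin n => (s i.succ j.succ)⁻¹) i j) i j := by
        ext i j
        simp [sub]
      rw [hm, Matrix.det_mul_column, Matrix.det_mul_row]
      simp only [hs]
      rw [ih', hsign]
      simp only [Fin.prod_univ_succ, Fin.prod_Ioi_zero, Fin.prod_Ioi_succ,
        Finset.prod_mul_distrib, Finset.prod_div_distrib, Finset.prod_neg]
      simp [div_eq_mul_inv]
      ring
    · intro i _
      have h2 := hs0 i.succ 0
      have h3 := hs0 0 0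
      have h0 : (s i.succ 0)⁻¹ - s 0 0 / s i.succ 0 * (s 0 0)⁻¹ = 0 := by
        field_simp
        simp
      simp [h0]

/-- The reciprocal of `∏ j < k, (1 - p ^ (j + 1))`, extended by zero to negative `k`. -/
noncomputable def qFactorialInv (p : ℂ) : ℤ → ℂ
  | Int.ofNat k => (∏ j ∈ Finset.range k, (1 - p ^ (j + 1)))⁻¹
  | Int.negSucc _ => 0

/-- The coefficient `(-1) ^ k * p ^ (k choose 2)` of the theta series. -/
noncomputable def thetaCoeff (p : ℂ) (k : ℤ) : ℂ := (-1) ^ k * p ^ (k * (k - 1) / 2)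

noncomputable def thetaSeries (p x : ℂ) : ℂ := ∑' k : ℤ, thetaCoeff p k * x ^ k

theorem one_sub_pow_succ_ne_zero {p : ℂ} (hp : ‖p‖ < 1) (j : ℕ) : 1 - p ^ (j + 1) ≠ 0 := by
  intro h
  have h1 : ‖p ^ (j + 1)‖ < 1 := by
    rw [norm_pow]
    exact pow_lt_one₀ (norm_nonneg p) hp j.succ_ne_zero
  rw [← sub_eq_zero.1 h] at h1
  simp at h1

theorem qFactorialInv_sub_one {p : ℂ} (hp : ‖p‖ < 1) (k : ℤ) :
    qFactorialInv p (k - 1) = (1 - p ^ k) * qFactorialInv p k := by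
  match k with
  | Int.ofNat 0 =>
    rw [show Int.ofNat 0 - 1 = Int.negSucc 0 from rfl]
    simp [qFactorialInv]
  | Int.ofNat (k + 1) =>
    have h : Int.ofNat (k + 1) - 1 = Int.ofNat k := by simp
    have h' : p ^ Int.ofNat (k + 1) = p ^ (k + 1) := zpow_natCast p (k + 1)
    have := one_sub_pow_succ_ne_zero hp k
    rw [h, h']
    simp only [qFactorialInv, Finset.prod_range_succ, mul_inv]
    field_simp
  | Int.negSucc k =>
    simp [show Int.negSucc k - 1 = Int.negSucc (k + 1) by lia, qFactorialInv]

theorem triangle_add_one (k : ℤ) : (k + 1) * (k + 1 - 1) / 2 = k * (k - 1) / 2 + k := by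
  rw [show (k + 1) * (k + 1 - 1) = k * (k - 1) + k * 2 by ring,
    Int.add_mul_ediv_right _ _ two_ne_zero]

theorem two_mul_triangle (k : ℤ) : 2 * (k * (k - 1) / 2) = k * (k - 1) :=
  Int.mul_ediv_cancel' (Int.even_mul_pred_self k).two_dvd

theorem thetaCoeff_add_one {p : ℂ} (hp0 : p ≠ 0) (k : ℤ) :
    thetaCoeff p (k + 1) = -(p ^ k * thetaCoeff p k) := by
  unfold thetaCoeff
  rw [triangle_add_one, zpow_add₀ hp0, zpow_add₀ (by norm_num)]
  ring

theorem thetaCoeff_ne_zero {p : ℂ} (hp0 : p ≠ 0) (k : ℤ) : thetaCoeff p k ≠ 0 :=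
  mul_ne_zero (zpow_ne_zero _ (by norm_num)) (zpow_ne_zero _ hp0)

theorem summable_norm_thetaCoeff_mul_zpow {p : ℂ} (hp0 : p ≠ 0) (hp : ‖p‖ < 1) {x : ℂ}
    (hx : x ≠ 0) : Summable fun k : ℤ => ‖thetaCoeff p k * x ^ k‖ := by
  have hpow : Filter.Tendsto (fun n : ℕ => ‖p‖ ^ n) Filter.atTop (nhds 0) :=
    tendsto_pow_atTop_nhds_zero_of_lt_one (norm_nonneg p) hp
  have hne : ∀ k : ℤ, ‖thetaCoeff p k * x ^ k‖ ≠ 0 := fun k =>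
    norm_ne_zero_iff.2 (mul_ne_zero (thetaCoeff_ne_zero hp0 k) (zpow_ne_zero k hx))
  have hstep : ∀ k : ℤ, ‖thetaCoeff p (k + 1) * x ^ (k + 1)‖ =
      ‖p‖ ^ k * ‖x‖ * ‖thetaCoeff p k * x ^ k‖ := by
    intro k
    rw [thetaCoeff_add_one hp0, zpow_add_one₀ hx]
    simp only [norm_mul, norm_neg, norm_zpow]
    ring
  apply Summable.of_nat_of_neg
  · refine summable_of_ratio_test_tendsto_lt_one zero_lt_one
      (Filter.Eventually.of_forall fun n => hne n) ?_
    have := hpow.mul_const ‖x‖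
    rw [zero_mul] at this
    refine this.congr fun n => ?_
    rw [norm_norm, norm_norm, Nat.cast_succ, hstep, mul_div_assoc, div_self (hne n), mul_one,
      zpow_natCast]
  · refine summable_of_ratio_test_tendsto_lt_one zero_lt_one
      (Filter.Eventually.of_forall fun n => hne _) ?_
    have := (hpow.comp (Filter.tendsto_add_atTop_nat 1)).mul_const ‖x‖⁻¹
    rw [zero_mul] at this
    refine this.congr fun n => ?_
    have h := hstep (-((n : ℤ) + 1))
    rw [show -((n : ℤ) + 1) + 1 = -(n : ℤ) by ring] at h
    rw [norm_norm, norm_norm, Nat.cast_succ, h, Function.comp_apply]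
    have h1 := hne (-((n : ℤ) + 1))
    have h2 : ‖p‖ ≠ 0 := norm_ne_zero_iff.2 hp0
    have h3 : ‖x‖ ≠ 0 := norm_ne_zero_iff.2 hx
    have h4 : ‖p‖ ^ (-((n : ℤ) + 1)) = (‖p‖ ^ (n + 1))⁻¹ := by
      rw [zpow_neg]
      exact_mod_cast congrArg _ (zpow_natCast ‖p‖ (n + 1))
    rw [h4]
    field_simp

theorem hasSum_finite_triple_product {p : ℂ} (hp0 : p ≠ 0) (hp : ‖p‖ < 1) {x : ℂ} (hx : x ≠ 0)
    (n : ℕ) :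
    HasSum (fun k : ℤ => (∏ j ∈ Finset.range (2 * n), (1 - p ^ (j + 1))) *
        (qFactorialInv p (n + k) * qFactorialInv p (n - k)) * (thetaCoeff p k * x ^ k))
      (∏ j ∈ Finset.range n, (1 - x * p ^ j) * (1 - p ^ (j + 1) * x⁻¹)) := by
  induction n with
  | zero =>
    convert hasSum_single (0 : ℤ) ?_ using 1
    · have h0 : qFactorialInv p 0 = 1 := by
        change (∏ j ∈ Finset.range 0, (1 - p ^ (j + 1)))⁻¹ = 1
        simp
      simp [thetaCoeff, h0]
    · intro k hk
      match k with
      | Int.ofNat 0 => exact absurd rfl hk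
      | Int.ofNat (k + 1) =>
        simp [show -((k : ℤ) + 1) = Int.negSucc k from rfl, qFactorialInv]
      | Int.negSucc k => simp [qFactorialInv]
  | succ n ih =>
    have h1 := (Equiv.subRight (1 : ℤ)).hasSum_iff.2 ih
    have h2 := (Equiv.addRight (1 : ℤ)).hasSum_iff.2 ih
    have h := ((ih.mul_left (1 + p ^ (2 * n + 1))).sub (h1.mul_left (x * p ^ n))).sub
      (h2.mul_left (p ^ (n + 1) * x⁻¹))
    rw [show ∏ j ∈ Finset.range (n + 1), (1 - x * p ^ j) * (1 - p ^ (j + 1) * x⁻¹) =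
        (1 + p ^ (2 * n + 1)) * (∏ j ∈ Finset.range n, (1 - x * p ^ j) * (1 - p ^ (j + 1) * x⁻¹)) -
          x * p ^ n * (∏ j ∈ Finset.range n, (1 - x * p ^ j) * (1 - p ^ (j + 1) * x⁻¹)) -
          p ^ (n + 1) * x⁻¹ *
            (∏ j ∈ Finset.range n, (1 - x * p ^ j) * (1 - p ^ (j + 1) * x⁻¹)) by
      rw [Finset.prod_range_succ]
      field_simp
      ring]
    refine h.congr_fun fun k => ?_
    simp only [Function.comp_apply, Equiv.subRight_apply, Equiv.coe_addRight]
    have e1 := thetaCoeff_add_one hp0 (k - 1)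
    rw [sub_add_cancel, zpow_sub_one₀ hp0] at e1
    have hpk : p ^ k ≠ 0 := zpow_ne_zero k hp0
    have e1' : thetaCoeff p (k - 1) = -(p * (p ^ k)⁻¹ * thetaCoeff p k) := by
      rw [e1]; field_simp
    rw [e1', thetaCoeff_add_one hp0, zpow_add_one₀ hx, zpow_sub_one₀ hx,
      show 2 * (n + 1) = 2 * n + 1 + 1 by ring, Finset.prod_range_succ, Finset.prod_range_succ]
    have u0 := qFactorialInv_sub_one hp (n + 1 + k)
    have u1 := qFactorialInv_sub_one hp (n + k)
    have v0 := qFactorialInv_sub_one hp (n + 1 - k)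
    have v1 := qFactorialInv_sub_one hp (n - k)
    rw [show (n : ℤ) + 1 + k - 1 = n + k by ring] at u0
    rw [show (n : ℤ) + 1 - k - 1 = n - k by ring] at v0
    rw [show (n : ℤ) + (k - 1) = n + k - 1 by ring, show (n : ℤ) - (k - 1) = n + 1 - k by ring,
      show (n : ℤ) + (k + 1) = n + 1 + k by ring, show (n : ℤ) - (k + 1) = n - k - 1 by ring,
      u1, v1, u0, v0]
    push_cast
    simp only [zpow_add₀ hp0, zpow_sub₀ hp0, zpow_natCast, zpow_one]
    field_simp
    ring

theorem theta_eq_const_mul_thetaSeries {p : ℂ} (hp0 : p ≠ 0) (hp : ‖p‖ < 1) :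
    ∃ c : ℂ, ∀ x : ℂ, x ≠ 0 → theta x p = c * thetaSeries p x := by
  have hsum : Summable fun j : ℕ => ‖p ^ j‖ := by
    simpa using summable_geometric_of_lt_one (norm_nonneg p) hp
  have hmul : ∀ y : ℂ, Multipliable fun j : ℕ => 1 - y * p ^ j := by
    intro y
    simp only [sub_eq_add_neg]
    refine multipliable_one_add_of_summable ?_
    simpa using hsum.mul_left ‖y‖
  set L : ℂ := ∏' j : ℕ, (1 - p * p ^ j)
  have hL : Filter.Tendsto (fun n => ∏ j ∈ Finset.range n, (1 - p ^ (j + 1))) Filter.atTop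
      (nhds L) := by
    simpa only [pow_succ'] using (hmul p).tendsto_prod_tprod_nat
  have hL0 : L ≠ 0 := by
    have := tprod_one_add_ne_zero_of_summable (f := fun j : ℕ => -(p * p ^ j))
      (fun j => by
        rw [← sub_eq_add_neg, ← pow_succ']
        exact one_sub_pow_succ_ne_zero hp j)
      (by simpa using hsum.mul_left ‖p‖)
    simpa only [← sub_eq_add_neg] using this
  have hR : Filter.Tendsto (fun n : ℕ => qFactorialInv p n) Filter.atTop (nhds L⁻¹) :=
    hL.inv₀ hL0
  have hRz : Filter.Tendsto (qFactorialInv p) Filter.atTop (nhds L⁻¹) := by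
    rw [← Nat.map_cast_int_atTop]
    exact hR
  obtain ⟨A, hA⟩ := (Metric.isBounded_range_of_tendsto _ hL).exists_norm_le
  obtain ⟨B, hB⟩ := (Metric.isBounded_range_of_tendsto _ hR).exists_norm_le
  have hB0 : 0 ≤ B := (norm_nonneg _).trans (hB _ ⟨0, rfl⟩)
  have hA0 : 0 ≤ A := (norm_nonneg _).trans (hA _ ⟨0, rfl⟩)
  have hBz : ∀ k, ‖qFactorialInv p k‖ ≤ B := fun k =>
    match k with
    | Int.ofNat k => hB _ ⟨k, rfl⟩
    | Int.negSucc k => by simpa [qFactorialInv] using hB0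
  refine ⟨L * (L⁻¹ * L⁻¹), fun x hx => ?_⟩
  have hprod : Filter.Tendsto
      (fun n => ∏ j ∈ Finset.range n, (1 - x * p ^ j) * (1 - p ^ (j + 1) * x⁻¹)) Filter.atTop
      (nhds (theta x p)) := by
    refine Multipliable.tendsto_prod_tprod_nat ((hmul x).mul ?_)
    refine (hmul (p * x⁻¹)).congr fun j => ?_
    ring
  refine tendsto_nhds_unique hprod ?_
  simp only [← (hasSum_finite_triple_product hp0 hp hx _).tsum_eq]
  unfold thetaSeries
  rw [← tsum_mul_left]
  refine tendsto_tsum_of_dominated_convergence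
    ((summable_norm_thetaCoeff_mul_zpow hp0 hp hx).mul_left (A * (B * B))) (fun k => ?_)
    (Filter.Eventually.of_forall fun n k => ?_)
  · have hcast : Filter.Tendsto (fun n : ℕ => (n : ℤ)) Filter.atTop Filter.atTop :=
      tendsto_natCast_atTop_atTop
    refine Filter.Tendsto.mul_const _ (Filter.Tendsto.mul ?_ (Filter.Tendsto.mul ?_ ?_))
    · exact hL.comp (Filter.tendsto_id.const_mul_atTop' two_pos)
    · exact hRz.comp (Filter.tendsto_atTop_add_const_right _ k hcast)
    · exact hRz.comp (by
        simpa only [sub_eq_add_neg] using Filter.tendsto_atTop_add_const_right _ (-k) hcast)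
  · rw [norm_mul, norm_mul, norm_mul (qFactorialInv p _)]
    gcongr
    · exact hA _ ⟨2 * n, rfl⟩
    · exact hBz _
    · exact hBz _

theorem thetaSeries_mul_thetaSeries {p : ℂ} (hp0 : p ≠ 0) (hp : ‖p‖ < 1) {a z : ℂ}
    (ha : a ≠ 0) (hz : z ≠ 0) :
    thetaSeries p (a * z) * thetaSeries p (a / z) =
      a * (a * thetaSeries (p ^ 2) (-(p ^ 2 * a ^ 2)) * thetaSeries (p ^ 2) (-(p * z ^ 2)) -
        z * thetaSeries (p ^ 2) (-(p ^ 2 * z ^ 2)) * thetaSeries (p ^ 2) (-(p * a ^ 2))) := by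
  have hs := fun {x : ℂ} (hx : x ≠ 0) => summable_norm_thetaCoeff_mul_zpow hp0 hp hx
  have hp2 : ‖p ^ 2‖ < 1 := by
    rw [norm_pow]
    exact pow_lt_one₀ (norm_nonneg p) hp two_ne_zero
  have hs2 := fun {x : ℂ} (hx : x ≠ 0) =>
    summable_norm_thetaCoeff_mul_zpow (pow_ne_zero 2 hp0) hp2 hx
  let e : (ℤ × ℤ) ⊕ (ℤ × ℤ) → ℤ × ℤ :=
    Sum.elim (fun m => (m.1 + m.2 + 1, m.1 - m.2 + 1)) (fun m => (m.1 + m.2 + 1, m.1 - m.2))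
  have he : Function.Bijective e := by
    constructor
    · rintro (⟨m, l⟩ | ⟨m, l⟩) (⟨m', l'⟩ | ⟨m', l'⟩) h <;> simp [e] at h ⊢ <;> lia
    · rintro ⟨m, l⟩
      rcases Int.even_or_odd' (m - l) with ⟨c, hc | hc⟩
      · exact ⟨Sum.inl (l + c - 1, c), by simp [e]; lia⟩
      · exact ⟨Sum.inr (l + c, c), by simp [e]; lia⟩
  have haz := hs (mul_ne_zero ha hz)
  have haz' := hs (div_ne_zero ha hz)
  have hprod := ((Equiv.ofBijective e he).summable_iff).2 (summable_mul_of_summable_norm haz haz')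
  have hsq : ∀ k : ℤ, ((p ^ 2) ^ (k * (k - 1) / 2) : ℂ) = p ^ (k * (k - 1)) := by
    intro k
    rw [← zpow_natCast p 2, ← zpow_mul, Nat.cast_two, two_mul_triangle]
  have hneg : ∀ (k : ℤ) (y : ℂ), (-1 : ℂ) ^ k * (-y) ^ k = y ^ k := by
    intro k y
    rw [← mul_zpow]
    simp
  have hodd : ∀ (k : ℤ) (y : ℂ), thetaCoeff (p ^ 2) k * (-(p ^ 2 * y ^ 2)) ^ k =
      p ^ (k * k + k) * y ^ (2 * k) := by
    intro k y
    rw [thetaCoeff, hsq, mul_right_comm, hneg, mul_zpow, zpow_mul y, ← zpow_natCast p 2,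
      ← zpow_mul, mul_right_comm, ← zpow_add₀ hp0]
    congr 2
    push_cast
    ring
  have heven : ∀ (k : ℤ) (y : ℂ), thetaCoeff (p ^ 2) k * (-(p * y ^ 2)) ^ k =
      p ^ (k * k) * y ^ (2 * k) := by
    intro k y
    rw [thetaCoeff, hsq, mul_right_comm, hneg, mul_zpow, zpow_mul y, mul_right_comm,
      ← zpow_add₀ hp0]
    congr 2
    ring
  have hcoeff : ∀ m l : ℤ, thetaCoeff p m * thetaCoeff p l =
      (-1) ^ (m + l) * p ^ (m * (m - 1) / 2 + l * (l - 1) / 2) := by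
    intro m l
    rw [thetaCoeff, thetaCoeff, zpow_add₀ hp0, zpow_add₀ (by norm_num)]
    ring
  have hvars : ∀ m l : ℤ, (a * z) ^ m * (a / z) ^ l = a ^ (m + l) * z ^ (m - l) := by
    intro m l
    rw [mul_zpow, div_zpow, zpow_add₀ ha, zpow_sub₀ hz]
    ring
  have hterm : ∀ m l : ℤ, thetaCoeff p m * (a * z) ^ m * (thetaCoeff p l * (a / z) ^ l) =
      (-1) ^ (m + l) * p ^ (m * (m - 1) / 2 + l * (l - 1) / 2) * (a ^ (m + l) * z ^ (m - l)) := by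
    intro m l
    rw [← hcoeff, ← hvars]
    ring
  have ha2 : -(p ^ 2 * a ^ 2) ≠ 0 := by simp [hp0, ha]
  have hz2 : -(p ^ 2 * z ^ 2) ≠ 0 := by simp [hp0, hz]
  have ha1 : -(p * a ^ 2) ≠ 0 := by simp [hp0, ha]
  have hz1 : -(p * z ^ 2) ≠ 0 := by simp [hp0, hz]
  calc thetaSeries p (a * z) * thetaSeries p (a / z)
      = ∑' s : (ℤ × ℤ) ⊕ (ℤ × ℤ), thetaCoeff p (e s).1 * (a * z) ^ (e s).1 *
          (thetaCoeff p (e s).2 * (a / z) ^ (e s).2) := by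
        rw [thetaSeries, thetaSeries, tsum_mul_tsum_of_summable_norm haz haz']
        exact ((Equiv.ofBijective e he).tsum_eq _).symm
    _ = (∑' m : ℤ × ℤ, a * a * ((thetaCoeff (p ^ 2) m.1 * (-(p ^ 2 * a ^ 2)) ^ m.1) *
            (thetaCoeff (p ^ 2) m.2 * (-(p * z ^ 2)) ^ m.2))) +
          ∑' m : ℤ × ℤ, -(a * z) * ((thetaCoeff (p ^ 2) m.1 * (-(p * a ^ 2)) ^ m.1) *
            (thetaCoeff (p ^ 2) m.2 * (-(p ^ 2 * z ^ 2)) ^ m.2)) := by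
        have hprod' : Summable fun s : (ℤ × ℤ) ⊕ (ℤ × ℤ) => thetaCoeff p (e s).1 *
            (a * z) ^ (e s).1 * (thetaCoeff p (e s).2 * (a / z) ^ (e s).2) := hprod
        rw [Summable.tsum_sum (hprod'.comp_injective Sum.inl_injective)
          (hprod'.comp_injective Sum.inr_injective)]
        congr 1 <;> refine tsum_congr fun m => ?_ <;> rcases m with ⟨m, l⟩ <;>
          simp only [e, Sum.elim_inl, Sum.elim_inr, hterm, hodd, heven]
        · have h1 := two_mul_triangle (m + l + 1)
          have h2 := two_mul_triangle (m - l + 1)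
          rw [show (m + l + 1) * (m + l + 1 - 1) / 2 + (m - l + 1) * (m - l + 1 - 1) / 2 =
            (m * m + m) + l * l by linarith, show m + l + 1 + (m - l + 1) = 2 * m + 1 + 1 by ring,
            show m + l + 1 - (m - l + 1) = 2 * l by ring, zpow_add₀ hp0, zpow_add_one₀ ha,
            zpow_add_one₀ ha, show 2 * m + 1 + 1 = 2 * (m + 1) by ring,
            (even_two_mul (m + 1)).neg_one_zpow]
          ring
        · have h1 := two_mul_triangle (m + l + 1)
          have h2 := two_mul_triangle (m - l)
          rw [show (m + l + 1) * (m + l + 1 - 1) / 2 + (m - l) * (m - l - 1) / 2 =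
            m * m + (l * l + l) by linarith, show m + l + 1 + (m - l) = 2 * m + 1 by ring,
            show m + l + 1 - (m - l) = 2 * l + 1 by ring, zpow_add₀ hp0, zpow_add_one₀ ha,
            zpow_add_one₀ hz, (odd_two_mul_add_one m).neg_one_zpow]
          ring
    _ = _ := by
        rw [tsum_mul_left, tsum_mul_left,
          ← tsum_mul_tsum_of_summable_norm (hs2 ha2) (hs2 hz1),
          ← tsum_mul_tsum_of_summable_norm (hs2 ha1) (hs2 hz2)]
        unfold thetaSeries
        ring

theorem theta_zero_right (x : ℂ) : theta x 0 = 1 - x := by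
  unfold theta
  rw [tprod_eq_mulSingle 0 fun j hj => by simp [hj]]
  simp

/-- `a⁻¹ * θ(a z) * θ(a / z)` is a rank-two alternating form in `a` and `z`. -/
theorem exists_theta_mul_theta_eq {p : ℂ} (hp : ‖p‖ < 1) :
    ∃ f g : ℂ → ℂ, ∀ a z : ℂ, a ≠ 0 → z ≠ 0 →
      a⁻¹ * (theta (a * z) p * theta (a / z) p) = f a * g z - g a * f z := by
  rcases eq_or_ne p 0 with rfl | hp0
  · refine ⟨fun a => a + a⁻¹, fun _ => 1, fun a z ha hz => ?_⟩
    rw [theta_zero_right, theta_zero_right]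
    field_simp
    ring
  · obtain ⟨c, hc⟩ := theta_eq_const_mul_thetaSeries hp0 hp
    refine ⟨fun a => c ^ 2 * (a * thetaSeries (p ^ 2) (-(p ^ 2 * a ^ 2))),
      fun a => thetaSeries (p ^ 2) (-(p * a ^ 2)), fun a z ha hz => ?_⟩
    rw [hc _ (mul_ne_zero ha hz), hc _ (div_ne_zero ha hz), mul_mul_mul_comm,
      thetaSeries_mul_thetaSeries hp0 hp ha hz]
    field_simp

theorem elliptic_cauchy_determinant (p : ℂ) (hp : ‖p‖ < 1) (n : ℕ)
    (a z : Fin n → ℂ) (ha : ∀ i, a i ≠ 0) (hz : ∀ j, z j ≠ 0)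
    (haz : ∀ i j, theta (a i * z j) p ≠ 0 ∧ theta (a i / z j) p ≠ 0)
    (haa : ∀ i j, i ≠ j → theta (a i * a j) p ≠ 0 ∧ theta (a i / a j) p ≠ 0)
    (hzz : ∀ i j, i ≠ j → theta (z i * z j) p ≠ 0 ∧ theta (z i / z j) p ≠ 0) :
    Matrix.det (Matrix.of fun i j : Fin n =>
        ((a i)⁻¹ * (theta (a i * z j) p * theta (a i / z j) p))⁻¹) =
      (-1 : ℂ) ^ (n * (n - 1) / 2) *
        ((∏ i, ∏ j ∈ Finset.univ.filter (fun j => i < j),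
            (a i)⁻¹ * (theta (a i * a j) p * theta (a i / a j) p)) *
         (∏ i, ∏ j ∈ Finset.univ.filter (fun j => i < j),
            (z i)⁻¹ * (theta (z i * z j) p * theta (z i / z j) p))) /
        ∏ i, ∏ j, (a i)⁻¹ * (theta (a i * z j) p * theta (a i / z j) p) := by
  obtain ⟨f, g, hfg⟩ := exists_theta_mul_theta_eq hp
  have hcauchy := det_cauchy_homogeneous n (fun i => f (a i)) (fun i => g (a i)) (fun j => f (z j))
    (fun j => g (z j)) fun i j => by
      rw [← hfg _ _ (ha i) (hz j)]
      exact mul_ne_zero (inv_ne_zero (ha i)) (mul_ne_zero (haz i j).1 (haz i j).2)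
  simp only [hfg _ _ (ha _) (hz _), hfg _ _ (ha _) (ha _), hfg _ _ (hz _) (hz _),
    Finset.filter_lt_eq_Ioi]
  exact hcauchy
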